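/- arXiv:1002.3310 — 7 statements merged into one kernel-verified Lean document; each statement's English description precedes it below -/
import Mathlib

section
/- If (x, y) ∈ K² satisfies the Weierstrass equation y² + x·y + t·y = x³ + t·x² and x ≠ −t, then the pair (X, Y) := (−y/(x + t), −x/t) satisfies X(X − 1)(1 − Y) = t·Y²; that is, the change of coordinates x₀ = −y/(x+t), y₀ = −x/t carries the Weierstrass curve y² + xy + ty = x³ + tx² onto the curve f(x₀) = t·g(y₀), where f(x₀) = x₀(x₀ − 1) and g(y₀) = y₀²/(1 − y₀). -/
/-- Let `k` be a field, `K = k(t)`, `t = X ∈ K`.  If `(x, y) ∈ K²` satisfies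
the Weierstrass equation `y² + x·y + t·y = x³ + t·x²` and `x ≠ −t`, then the pair
`(X, Y) = (−y/(x+t), −x/t)` satisfies `X(X−1)(1−Y) = t·Y²`; that is, the change of
coordinates carries the Weierstrass curve onto the curve `f(x₀) = t·g(y₀)` with
`f(x₀) = x₀(x₀−1)` and `g(y₀) = y₀²/(1−y₀)`. -/
theorem stmt1 (k : Type*) [Field k] (t x y : RatFunc k) (ht : t = RatFunc.X)
    (heq : y ^ 2 + x * y + t * y = x ^ 3 + t * x ^ 2) (hx : x ≠ -t) :
    (-y / (x + t)) * ((-y / (x + t)) - 1) * (1 - (-x / t)) = t * (-x / t) ^ 2 := by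
  have ht0 : t ≠ 0 := by
    rw [ht]
    exact RatFunc.X_ne_zero
  have hs : x + t ≠ 0 := fun h => hx (eq_neg_of_add_eq_zero_left h)
  have h1 : (-y / (x + t)) * ((-y / (x + t)) - 1) = x ^ 2 / (x + t) := by
    have e : -y / (x + t) - 1 = (-y - (x + t)) / (x + t) := by
      rw [sub_div, div_self hs]
    rw [e, div_mul_div_comm, div_eq_div_iff (mul_ne_zero hs hs) hs]
    linear_combination (x + t) * heq
  have h2 : 1 - (-x / t) = (x + t) / t := by
    rw [add_div, div_self ht0]
    ring
  rw [h1, h2, div_mul_div_cancel₀ hs, div_pow, mul_div_assoc', div_eq_div_iff ht0 (pow_ne_zero 2 ht0)]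
  ring
end

section
/- Let p = 2, n ≥ 1, q = 2^n, and d = q + 1. Then the pair (x₀, y₀) = ( u^q(u^q − u) , u^{2q}·(u^2 + u^4 + u^8 + ⋯ + u^{2^n}) ) ∈ K_d² (where the second coordinate is u^{2q}·Σ_{j=1}^{n} u^{2^j}) satisfies the Weierstrass equation y₀² + x₀·y₀ + u^d·y₀ = x₀³ + u^d·x₀², i.e. it defines a point of X_d(K_d). -/
theorem stmt4_aux {R : Type*} [CommRing R] (h2 : (2 : R) = 0) (u : R) (n : ℕ) :
    (∑ j ∈ Finset.Icc 1 n, u ^ (2 ^ j)) ^ 2 + ∑ j ∈ Finset.Icc 1 n, u ^ (2 ^ j)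
      = u ^ 2 + (u ^ (2 ^ n)) ^ 2 := by
  induction n with
  | zero => simp; linear_combination (-u ^ 2) * h2
  | succ n ih =>
    rw [Finset.sum_Icc_succ_top (by omega), pow_succ 2 n, pow_mul u]
    generalize (∑ j ∈ Finset.Icc 1 n, u ^ (2 ^ j)) = S at *
    generalize u ^ (2 ^ n) = Q at *
    linear_combination ih + (S * Q ^ 2 + Q ^ 2) * h2

/-- Let `p = 2`, `k` an algebraic closure of `𝔽₂`, `n ≥ 1`, `q = 2^n`,
`d = q + 1`, and `K_d = k(u)`.  Then the pair
`(x₀, y₀) = (u^q(u^q − u), u^{2q}·∑_{j=1}^{n} u^{2^j})` satisfies the Weierstrass equation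
`y₀² + x₀·y₀ + u^d·y₀ = x₀³ + u^d·x₀²`, i.e. it defines a point of `X_d(K_d)`. -/
theorem stmt4 (n : ℕ) (hn : 1 ≤ n) (q d : ℕ) (hq : q = 2 ^ n) (hd : d = q + 1) :
    let k := AlgebraicClosure (ZMod 2)
    let u : RatFunc k := RatFunc.X
    let x₀ : RatFunc k := u ^ q * (u ^ q - u)
    let y₀ : RatFunc k := u ^ (2 * q) * ∑ j ∈ Finset.Icc 1 n, u ^ (2 ^ j)
    y₀ ^ 2 + x₀ * y₀ + u ^ d * y₀ = x₀ ^ 3 + u ^ d * x₀ ^ 2 := by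
  intro k u x₀ y₀
  have h2 : (2 : RatFunc k) = 0 := by
    have h : (2 : k) = 0 := CharTwo.two_eq_zero
    have := congrArg (algebraMap k (RatFunc k)) h
    simpa only [map_ofNat, map_zero] using this
  have key := stmt4_aux h2 u n
  rw [← hq] at key
  simp only [x₀, y₀]
  rw [hd, mul_comm 2 q, pow_mul, pow_succ u q]
  generalize (∑ j ∈ Finset.Icc 1 n, u ^ (2 ^ j)) = S at *
  generalize u ^ q = Q at *
  linear_combination Q ^ 4 * key + (Q ^ 5 * u) * h2
end

section
/- Let p be an odd prime, n ≥ 1, q = p^n, and d = q + 1. Then the pair (x₀, y₀) with x₀ = u^q(u^q − u)/(1 + 4u)^q and y₀ = u^{2q}(1 + 2u + 2u^q)/(2(1 + 4u)^{(3q−1)/2}) − u^{2q}/(2(1 + 4u)^{q−1}) in K_d² satisfies the Weierstrass equation y₀² + x₀·y₀ + u^d·y₀ = x₀³ + u^d·x₀², i.e. it defines a point of X_d(K_d). -/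
theorem stmt5_aux {K : Type*} [Field K] (u U s : K) (h2 : (2 : K) ≠ 0) (hw : 1 + 4 * u ≠ 0)
    (hs : s ≠ 0) (hU : s ^ 2 * (1 + 4 * u) = 1 + 4 * U) :
    (U ^ 2 * (1 + 2 * u + 2 * U) / (2 * (s ^ 3 * (1 + 4 * u))) - U ^ 2 / (2 * s ^ 2)) ^ 2
      + U * (U - u) / (s ^ 2 * (1 + 4 * u))
        * (U ^ 2 * (1 + 2 * u + 2 * U) / (2 * (s ^ 3 * (1 + 4 * u))) - U ^ 2 / (2 * s ^ 2))
      + U * u * (U ^ 2 * (1 + 2 * u + 2 * U) / (2 * (s ^ 3 * (1 + 4 * u))) - U ^ 2 / (2 * s ^ 2))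
    = (U * (U - u) / (s ^ 2 * (1 + 4 * u))) ^ 3
      + U * u * (U * (U - u) / (s ^ 2 * (1 + 4 * u))) ^ 2 := by
  have h4 : (4 : K) ≠ 0 := by
    have : (4 : K) = 2 * 2 := by norm_num
    rw [this]; exact mul_ne_zero h2 h2
  have hy : U ^ 2 * (1 + 2 * u + 2 * U) / (2 * (s ^ 3 * (1 + 4 * u))) - U ^ 2 / (2 * s ^ 2)
      = U ^ 2 * (s - 1) ^ 2 / (4 * s ^ 3) := by
    rw [div_sub_div _ _ (by simp [h2, h4, hw, hs]) (by simp [h2, h4, hw, hs]), div_eq_div_iff (by simp [h2, h4, hw, hs]) (by simp [h2, h4, hw, hs])]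
    linear_combination (-4) * U ^ 2 * s ^ 5 * hU
  have hx : U * (U - u) / (s ^ 2 * (1 + 4 * u)) = U * (s ^ 2 - 1) / (4 * s ^ 2) := by
    rw [div_eq_div_iff (by simp [h2, h4, hw, hs]) (by simp [h2, h4, hw, hs])]
    linear_combination (-1) * U * s ^ 2 * hU
  have hA : u = U / s ^ 2 - (s ^ 2 - 1) / (4 * s ^ 2) := by
    field_simp
    linear_combination hU
  rw [hy, hx]
  clear hy hx hU hw
  rw [hA]
  field_simp
  ring

/-- Let `p` be an odd prime, `k` an algebraic closure of `𝔽_p`, `n ≥ 1`,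
`q = p^n`, `d = q + 1`, and `K_d = k(u)`.  Then the pair `(x₀, y₀)` with
`x₀ = u^q(u^q − u)/(1 + 4u)^q` and
`y₀ = u^{2q}(1 + 2u + 2u^q)/(2(1 + 4u)^{(3q−1)/2}) − u^{2q}/(2(1 + 4u)^{q−1})`
satisfies the Weierstrass equation `y₀² + x₀·y₀ + u^d·y₀ = x₀³ + u^d·x₀²`,
i.e. it defines a point of `X_d(K_d)`. -/
theorem stmt5 (p : ℕ) [Fact p.Prime] (hp2 : p ≠ 2) (n : ℕ) (hn : 1 ≤ n) (q d : ℕ)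
    (hq : q = p ^ n) (hd : d = q + 1) :
    let k := AlgebraicClosure (ZMod p)
    let u : RatFunc k := RatFunc.X
    let x₀ : RatFunc k := u ^ q * (u ^ q - u) / (1 + 4 * u) ^ q
    let y₀ : RatFunc k :=
      u ^ (2 * q) * (1 + 2 * u + 2 * u ^ q) / (2 * (1 + 4 * u) ^ ((3 * q - 1) / 2))
        - u ^ (2 * q) / (2 * (1 + 4 * u) ^ (q - 1))
    y₀ ^ 2 + x₀ * y₀ + u ^ d * y₀ = x₀ ^ 3 + u ^ d * x₀ ^ 2 := by
  intro k u x₀ y₀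
  have hpp : p.Prime := Fact.out
  have : CharP (RatFunc k) p :=
    charP_of_injective_algebraMap (algebraMap k (RatFunc k)).injective p
  have : ExpChar (RatFunc k) p := ExpChar.prime hpp
  have h2 : (2 : RatFunc k) ≠ 0 := Ring.two_ne_zero (by rw [ringChar.eq (RatFunc k) p]; exact hp2)
  have hw : 1 + 4 * u ≠ 0 := by
    intro h
    have h' : algebraMap (Polynomial k) (RatFunc k) (1 + 4 * Polynomial.X) = 0 := by
      rw [map_add, map_mul, map_one, map_ofNat, RatFunc.algebraMap_X]; exact h
    have h3 := (map_eq_zero_iff _ (RatFunc.algebraMap_injective k)).1 h'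
    have h4 := congrArg (Polynomial.eval 0) h3
    simp at h4
  have hodd : Odd q := by rw [hq]; exact (hpp.odd_of_ne_two hp2).pow
  obtain ⟨m, hm⟩ := hodd
  have hF : (1 + 4 * u) ^ q = 1 + 4 * u ^ q := by
    have h4 : (4 : RatFunc k) ^ p ^ n = 4 := by
      rw [← iterateFrobenius_def]; exact map_ofNat (iterateFrobenius (RatFunc k) p n) 4
    rw [hq, add_pow_expChar_pow, mul_pow, one_pow, h4]
  have e1 : (3 * q - 1) / 2 = m * 3 + 1 := by omega
  have e2 : q - 1 = m * 2 := by omega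
  have e3 : (1 + 4 * u) ^ q = ((1 + 4 * u) ^ m) ^ 2 * (1 + 4 * u) := by
    rw [hm, ← pow_mul, ← pow_succ, mul_comm m 2]
  have key := stmt5_aux u (u ^ q) ((1 + 4 * u) ^ m) h2 hw (pow_ne_zero _ hw) (e3 ▸ hF)
  have e4 : u ^ (2 * q) = (u ^ q) ^ 2 := by rw [← pow_mul, mul_comm]
  simp only [x₀, y₀]
  rw [e1, e2, e3, hd, pow_succ u q, e4, pow_succ (1 + 4 * u) (m * 3), pow_mul, pow_mul]
  exact key
end

section
/- Let p be an odd prime, n ≥ 1, q = p^n, d = q + 1, and let x₀ = u^q(u^q − u)/(1 + 4u)^q and y₀ = u^{2q}(1 + 2u + 2u^q)/(2(1 + 4u)^{(3q−1)/2}) − u^{2q}/(2(1 + 4u)^{q−1}) in K_d. Then both sides of the Weierstrass equation evaluated at (x₀, y₀) are equal to u^{4q}(u^{2q} − 2u^{q+1} + u²)/(1 + 4u)^{3q−1}; that is, y₀² + x₀·y₀ + u^d·y₀ = u^{4q}(u^{2q} − 2u^{q+1} + u²)/(1 + 4u)^{3q−1} and x₀³ + u^d·x₀² = u^{4q}(u^{2q}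 − 2u^{q+1} + u²)/(1 + 4u)^{3q−1}. -/
theorem stmt6_aux {K : Type*} [Field K] (a b s r : K) (h2 : (2 : K) ≠ 0) (hs0 : s ≠ 0)
    (hr0 : r ≠ 0) (hs : s = 1 + 4 * a) (hS : s * r ^ 2 = 1 + 4 * b) :
    (b ^ 2 * (1 + 2 * a + 2 * b) / (2 * (s * r ^ 3)) - b ^ 2 / (2 * r ^ 2)) ^ 2
      + b * (b - a) / (s * r ^ 2)
        * (b ^ 2 * (1 + 2 * a + 2 * b) / (2 * (s * r ^ 3)) - b ^ 2 / (2 * r ^ 2))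
      + b * a * (b ^ 2 * (1 + 2 * a + 2 * b) / (2 * (s * r ^ 3)) - b ^ 2 / (2 * r ^ 2))
      = b ^ 4 * (b ^ 2 - 2 * (b * a) + a ^ 2) / (s ^ 2 * r ^ 6) ∧
    (b * (b - a) / (s * r ^ 2)) ^ 3 + b * a * (b * (b - a) / (s * r ^ 2)) ^ 2
      = b ^ 4 * (b ^ 2 - 2 * (b * a) + a ^ 2) / (s ^ 2 * r ^ 6) := by
  have hx : b * (b - a) / (s * r ^ 2) + b * a = b ^ 2 / r ^ 2 := by
    field_simp
    linear_combination b * a * hS - b ^ 2 * hs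
  generalize hX : b * (b - a) / (s * r ^ 2) = x at *
  generalize hY : b ^ 2 * (1 + 2 * a + 2 * b) / (2 * (s * r ^ 3)) - b ^ 2 / (2 * r ^ 2) = y
  constructor
  · have e1 : y ^ 2 + x * y + b * a * y = y * (y + (x + b * a)) := by ring
    have e2 : y + b ^ 2 / r ^ 2
        = b ^ 2 * (1 + 2 * a + 2 * b) / (2 * (s * r ^ 3)) + b ^ 2 / (2 * r ^ 2) := by
      rw [← hY]; field_simp; ring
    have e3 : (1 + 2 * a + 2 * b) ^ 2 - s ^ 2 * r ^ 2 = 2 ^ 2 * (b - a) ^ 2 := by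
      linear_combination (-(1 + 4 * b)) * hs - s * hS
    have e4 : y * (y + b ^ 2 / r ^ 2)
        = b ^ 4 * ((1 + 2 * a + 2 * b) ^ 2 - s ^ 2 * r ^ 2) / (2 ^ 2 * (s ^ 2 * r ^ 6)) := by
      rw [e2, ← hY]; field_simp; ring
    rw [e1, hx, e4, e3]; field_simp; ring
  · have e1 : x ^ 3 + b * a * x ^ 2 = x ^ 2 * (x + b * a) := by ring
    rw [e1, hx, ← hX]; field_simp; ring

/-- Let `p` be an odd prime, `k` an algebraic closure of `𝔽_p`, `n ≥ 1`,
`q = p^n`, `d = q + 1`, `K_d = k(u)`, and let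
`x₀ = u^q(u^q − u)/(1 + 4u)^q` and
`y₀ = u^{2q}(1 + 2u + 2u^q)/(2(1 + 4u)^{(3q−1)/2}) − u^{2q}/(2(1 + 4u)^{q−1})`.
Then both sides of the Weierstrass equation `y² + x·y + u^d·y = x³ + u^d·x²` evaluated at
`(x₀, y₀)` equal `u^{4q}(u^{2q} − 2u^{q+1} + u²)/(1 + 4u)^{3q−1}`. -/
theorem stmt6 (p : ℕ) [Fact p.Prime] (hp2 : p ≠ 2) (n : ℕ) (hn : 1 ≤ n) (q d : ℕ)
    (hq : q = p ^ n) (hd : d = q + 1) :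
    let k := AlgebraicClosure (ZMod p)
    let u : RatFunc k := RatFunc.X
    let x₀ : RatFunc k := u ^ q * (u ^ q - u) / (1 + 4 * u) ^ q
    let y₀ : RatFunc k :=
      u ^ (2 * q) * (1 + 2 * u + 2 * u ^ q) / (2 * (1 + 4 * u) ^ ((3 * q - 1) / 2))
        - u ^ (2 * q) / (2 * (1 + 4 * u) ^ (q - 1))
    y₀ ^ 2 + x₀ * y₀ + u ^ d * y₀
        = u ^ (4 * q) * (u ^ (2 * q) - 2 * u ^ (q + 1) + u ^ 2) / (1 + 4 * u) ^ (3 * q - 1) ∧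
    x₀ ^ 3 + u ^ d * x₀ ^ 2
        = u ^ (4 * q) * (u ^ (2 * q) - 2 * u ^ (q + 1) + u ^ 2) / (1 + 4 * u) ^ (3 * q - 1) := by
  intro k u x₀ y₀
  have hpp : p.Prime := Fact.out
  obtain ⟨m, hm⟩ : Odd q := hq ▸ (hpp.odd_of_ne_two hp2).pow
  have : CharP (RatFunc k) p :=
    charP_of_injective_algebraMap (algebraMap k (RatFunc k)).injective p
  have : ExpChar (RatFunc k) p := ExpChar.prime hpp
  have h2 : (2 : RatFunc k) ≠ 0 := Ring.two_ne_zero (by rwa [ringChar.eq (RatFunc k) p])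
  have hfrob : (1 + 4 * u) ^ q = 1 + 4 * u ^ q := by
    have h4 : (4 : RatFunc k) ^ q = 4 := by
      have := map_natCast (iterateFrobenius (RatFunc k) p n) 4
      rw [iterateFrobenius_def, ← hq] at this
      exact_mod_cast this
    rw [hq, add_pow_expChar_pow, one_pow, mul_pow, ← hq, h4]
  have hs0 : (1 + 4 * u) ≠ 0 := by
    intro h
    have h' : algebraMap (Polynomial k) (RatFunc k) (1 + 4 * Polynomial.X) = 0 := by
      rw [map_add, map_mul, map_one, map_ofNat, RatFunc.algebraMap_X]
      exact h
    have h'' := (map_eq_zero_iff _ (RatFunc.algebraMap_injective k)).1 h'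
    have := congrArg (Polynomial.eval 0) h''
    simp at this
  have hS : (1 + 4 * u) * ((1 + 4 * u) ^ m) ^ 2 = 1 + 4 * u ^ q := by
    rw [← hfrob, hm]; ring
  have key := stmt6_aux u (u ^ q) (1 + 4 * u) ((1 + 4 * u) ^ m) h2 hs0 (pow_ne_zero _ hs0) rfl hS
  have c1 : (1 + 4 * u) ^ ((3 * q - 1) / 2) = (1 + 4 * u) * ((1 + 4 * u) ^ m) ^ 3 := by
    rw [show (3 * q - 1) / 2 = 3 * m + 1 by omega]; ring
  have c2 : (1 + 4 * u) ^ (q - 1) = ((1 + 4 * u) ^ m) ^ 2 := by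
    rw [show q - 1 = m * 2 by omega, pow_mul]
  have c3 : (1 + 4 * u) ^ (3 * q - 1) = (1 + 4 * u) ^ 2 * ((1 + 4 * u) ^ m) ^ 6 := by
    rw [show 3 * q - 1 = 6 * m + 2 by omega]; ring
  have c4 : (1 + 4 * u) ^ q = (1 + 4 * u) * ((1 + 4 * u) ^ m) ^ 2 := by
    rw [hS, hfrob]
  have c5 : u ^ (2 * q) = (u ^ q) ^ 2 := by rw [mul_comm, pow_mul]
  have c6 : u ^ (4 * q) = (u ^ q) ^ 4 := by rw [mul_comm, pow_mul]
  have c7 : u ^ (q + 1) = u ^ q * u := pow_succ _ _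
  simp only [x₀, y₀]
  rw [hd, c1, c2, c3, c4, c5, c6, c7]
  exact key
end

section
/- Let p be a prime, m, n ≥ 1, q = p^m, and d = p^n + 1. Then, as an inequality of rational numbers, Σ_{e ∣ d, e > 2} φ(e)/o_e(q) ≥ (p^n − 1)/(2n), where the sum is over divisors e > 2 of d, φ is Euler's totient function, and o_e(q) is the multiplicative order of q modulo e (well-defined since every divisor e of p^n + 1 is coprime to q). -/
/-- Let `p` be a prime, `m, n ≥ 1`, `q = p^m`, and `d = p^n + 1`.  Then,
as an inequality of rational numbers, `∑_{e ∣ d, e > 2} φ(e)/o_e(q) ≥ (p^n − 1)/(2n)`,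
where `φ` is Euler's totient function and `o_e(q)` is the multiplicative order of `q`
modulo `e`. -/
theorem stmt11 (p : ℕ) (hp : p.Prime) (m n : ℕ) (hm : 1 ≤ m) (hn : 1 ≤ n)
    (q d : ℕ) (hq : q = p ^ m) (hd : d = p ^ n + 1) :
    ((p : ℚ) ^ n - 1) / (2 * n)
      ≤ ∑ e ∈ d.divisors.filter (fun e => 2 < e),
          (Nat.totient e : ℚ) / (orderOf ((q : ZMod e)) : ℚ) := by
  have hn0 : (0 : ℚ) < 2 * n := by
    have : (0 : ℚ) < n := by exact_mod_cast hn
    linarith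
  have key : ((p : ℚ) ^ n - 1) ≤ ∑ e ∈ d.divisors.filter (fun e => 2 < e), (Nat.totient e : ℚ) := by
    have h1 : ∑ e ∈ d.divisors, Nat.totient e = d := Nat.sum_totient d
    rw [← Finset.sum_filter_add_sum_filter_not d.divisors (fun e => 2 < e)] at h1
    have h2 : ∑ e ∈ d.divisors.filter (fun e => ¬ 2 < e), Nat.totient e ≤ 2 := by
      calc _ ≤ ∑ e ∈ ({1, 2} : Finset ℕ), Nat.totient e := by
            apply Finset.sum_le_sum_of_subset
            intro e he
            rw [Finset.mem_filter] at he
            have := Nat.pos_of_mem_divisors he.1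
            simp only [Finset.mem_insert, Finset.mem_singleton]
            omega
        _ ≤ 2 := by decide
    have h3 : p ^ n + 1 ≤ ∑ e ∈ d.divisors.filter (fun e => 2 < e), Nat.totient e + 2 := by omega
    have h4 : ((p ^ n + 1 : ℕ) : ℚ) ≤ ((∑ e ∈ d.divisors.filter (fun e => 2 < e), Nat.totient e + 2 : ℕ) : ℚ) := by
      exact_mod_cast h3
    push_cast at h4
    linarith
  calc ((p : ℚ) ^ n - 1) / (2 * n)
      ≤ (∑ e ∈ d.divisors.filter (fun e => 2 < e), (Nat.totient e : ℚ)) / (2 * n) := by gcongr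
    _ = ∑ e ∈ d.divisors.filter (fun e => 2 < e), (Nat.totient e : ℚ) / (2 * n) := by
        rw [Finset.sum_div]
    _ ≤ _ := by
        apply Finset.sum_le_sum
        intro e he
        rw [Finset.mem_filter] at he
        have hed := Nat.dvd_of_mem_divisors he.1
        have h1 : ((p : ZMod e)) ^ n + 1 = 0 := by
          have := (ZMod.natCast_eq_zero_iff d e).2 hed
          rw [hd] at this
          exact_mod_cast this
        have h2 : ((q : ZMod e)) ^ (2 * n) = 1 := by
          have h3 : (p : ZMod e) ^ n = -1 := eq_neg_of_add_eq_zero_left h1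
          rw [hq]
          push_cast
          rw [← pow_mul, show m * (2 * n) = n * (2 * m) by ring, pow_mul, h3, pow_mul]
          simp
        have h4 : orderOf (q : ZMod e) ≤ 2 * n :=
          orderOf_le_of_pow_eq_one (by omega) h2
        have h5 : 0 < orderOf (q : ZMod e) :=
          orderOf_pos_iff.2 (isOfFinOrder_iff_pow_eq_one.2 ⟨2 * n, by omega, h2⟩)
        have h6 : (orderOf (q : ZMod e) : ℚ) ≤ 2 * n := by exact_mod_cast h4
        have h7 : (0 : ℚ) < orderOf (q : ZMod e) := by exact_mod_cast h5
        gcongr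
end

section
/- For positive integers a, b set δ(a,b) := (ab − a − b + gcd(a,b))/2. Then: (i) ab − a − b + gcd(a,b) is a nonnegative even integer, so δ(a,b) is a well-defined nonnegative integer; (ii) δ(a,b) = δ(b,a); (iii) δ(a,a) = a(a−1)/2; and (iv) if a > b then δ(a,b) = b(b−1)/2 + δ(a−b, b). Consequently, δ(a,b) equals the total sum Σ e_t(e_t − 1)/2 over the steps of the subtractive Euclidean algorithm applied to (a,b), where e_t is the smaller member of the pair at step t. -/
/-- `δ(a,b) = (ab − a − b + gcd(a,b))/2`. -/
def ulmerDelta (a b : ℕ) : ℕ := (a * b + Nat.gcd a b - a - b) / 2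

/-- The total of `e(e−1)/2` over the steps of the subtractive Euclidean algorithm applied
to `(a,b)`, where `e` is the smaller member of the pair at each step. -/
def subEuclidSum (a b : ℕ) : ℕ :=
  if _h : a = 0 ∨ b = 0 then 0
  else if _h2 : a ≤ b then a * (a - 1) / 2 + subEuclidSum a (b - a)
  else b * (b - 1) / 2 + subEuclidSum (a - b) b
termination_by a + b
decreasing_by
  · omega
  · omega

theorem two_mul_tri (e : ℕ) : 2 * (e * (e - 1) / 2) + e = e * e := by
  have h : 2 * (e * (e - 1) / 2) = e * (e - 1) :=
    Nat.mul_div_cancel' (Nat.even_mul_pred_self e).two_dvd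
  rw [h]
  cases e with
  | zero => rfl
  | succ n => simp only [Nat.add_sub_cancel]; ring

theorem subEuclidSum_key (a b : ℕ) :
    2 * subEuclidSum a b + a + b = a * b + Nat.gcd a b := by
  induction a, b using subEuclidSum.induct with
  | case1 a b h =>
    rw [subEuclidSum, dif_pos h]
    rcases h with rfl | rfl <;> simp
  | case2 a b h h2 ih =>
    rw [subEuclidSum, dif_neg h, dif_pos h2]
    obtain ⟨c, rfl⟩ := Nat.exists_eq_add_of_le h2
    have ht := two_mul_tri a
    simp only [Nat.add_sub_cancel_left, Nat.gcd_self_add_right] at ih ⊢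
    rw [mul_add a a c]
    omega
  | case3 a b h h2 ih =>
    rw [subEuclidSum, dif_neg h, dif_neg h2]
    obtain ⟨c, rfl⟩ := Nat.exists_eq_add_of_le (le_of_not_ge h2)
    have ht := two_mul_tri b
    simp only [Nat.add_sub_cancel_left, Nat.gcd_self_add_left] at ih ⊢
    rw [add_mul b c b]
    omega

theorem ulmerDelta_eq (a b : ℕ) : ulmerDelta a b = subEuclidSum a b := by
  have h := subEuclidSum_key a b
  unfold ulmerDelta
  omega

/-- For positive integers `a, b` set `δ(a,b) = (ab − a − b + gcd(a,b))/2`.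
Then: (i) `ab − a − b + gcd(a,b)` is a nonnegative even integer, so `δ(a,b)` is a
well-defined nonnegative integer; (ii) `δ(a,b) = δ(b,a)`; (iii) `δ(a,a) = a(a−1)/2`;
(iv) if `a > b` then `δ(a,b) = b(b−1)/2 + δ(a−b,b)`.  Consequently `δ(a,b)` equals the
total sum `∑ eₜ(eₜ−1)/2` over the steps of the subtractive Euclidean algorithm applied to
`(a,b)`, where `eₜ` is the smaller member of the pair at step `t`. -/
theorem stmt13 (a b : ℕ) (ha : 0 < a) (hb : 0 < b) :
    (a + b ≤ a * b + Nat.gcd a b ∧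
      2 * ulmerDelta a b + a + b = a * b + Nat.gcd a b) ∧
    ulmerDelta a b = ulmerDelta b a ∧
    ulmerDelta a a = a * (a - 1) / 2 ∧
    (a > b → ulmerDelta a b = b * (b - 1) / 2 + ulmerDelta (a - b) b) ∧
    ulmerDelta a b = subEuclidSum a b := by
  have key : ∀ x y : ℕ, 2 * ulmerDelta x y + x + y = x * y + Nat.gcd x y := fun x y => by
    rw [ulmerDelta_eq]; exact subEuclidSum_key x y
  have h1 := key a b
  refine ⟨⟨by omega, h1⟩, ?_, ?_, ?_, ulmerDelta_eq a b⟩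
  · have h2 := key b a
    rw [Nat.gcd_comm, mul_comm b a] at h2
    omega
  · have h2 := key a a
    have ht := two_mul_tri a
    rw [Nat.gcd_self] at h2
    omega
  · intro hab
    obtain ⟨c, rfl⟩ := Nat.exists_eq_add_of_le hab.le
    have h2 := key c b
    have ht := two_mul_tri b
    rw [Nat.gcd_self_add_left, add_mul] at h1
    rw [Nat.add_sub_cancel_left]
    omega
end

section
/- Let k be an algebraically closed field and d ≥ 1 an integer not divisible by the characteristic of k. Then the polynomial x(x − 1)(1 − y) − u^d·y² is irreducible in the polynomial ring k[x, y, u]. -/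
open MvPolynomial

lemma aux_ndvd {k : Type*} [Field k] (i : Fin 2) (v : Fin 2 → k) (hv : v i = 0)
    (p : MvPolynomial (Fin 2) k) (hp : MvPolynomial.eval v p ≠ 0) : ¬ (X i ∣ p) := by
  rintro ⟨q, rfl⟩
  simp [hv] at hp

lemma aux_irr (k : Type*) [Field k] (d : ℕ) :
    Irreducible (Polynomial.C (-(X 1 : MvPolynomial (Fin 2) k) ^ d) * Polynomial.X ^ 2
      + Polynomial.C (-(X 0 * (X 0 - 1))) * Polynomial.X
      + Polynomial.C (X 0 * (X 0 - 1)) : Polynomial (MvPolynomial (Fin 2) k)) := by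
  have ha : (-(X 1 : MvPolynomial (Fin 2) k) ^ d) ≠ 0 := by
    simp [X_ne_zero]
  have hp0 : Prime (X 0 : MvPolynomial (Fin 2) k) := X_prime
  have hp1 : Prime (X 1 : MvPolynomial (Fin 2) k) := X_prime
  have h01 : ¬ ((X 0 : MvPolynomial (Fin 2) k) ∣ X 1 ^ d) :=
    aux_ndvd 0 ![0, 1] (by simp) _ (by simp)
  have h00 : ¬ ((X 0 : MvPolynomial (Fin 2) k) ∣ X 0 - 1) :=
    aux_ndvd 0 ![0, 1] (by simp) _ (by simp)
  have h10 : ¬ ((X 1 : MvPolynomial (Fin 2) k) ∣ X 0) :=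
    aux_ndvd 1 ![1, 0] (by simp) _ (by simp)
  have h11 : ¬ ((X 1 : MvPolynomial (Fin 2) k) ∣ X 0 - 1) :=
    aux_ndvd 1 ![0, 0] (by simp) _ (by simp)
  refine Polynomial.irreducible_of_eisenstein_criterion (P := Ideal.span {X 0})
    ((Ideal.span_singleton_prime hp0.ne_zero).2 hp0) ?_ ?_ ?_ ?_ ?_
  · rw [Polynomial.leadingCoeff_quadratic ha, Ideal.mem_span_singleton, dvd_neg]
    exact h01
  · intro n hn
    rw [Polynomial.degree_quadratic ha] at hn
    have hn2 : n < 2 := by exact_mod_cast hn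
    rw [Ideal.mem_span_singleton]
    interval_cases n <;> 
      simp [Polynomial.coeff_X, Polynomial.coeff_C, -map_mul, -map_sub, -map_neg, -map_pow]
  · rw [Polynomial.degree_quadratic ha]; norm_num
  · rw [Ideal.span_singleton_pow, Ideal.mem_span_singleton]
    simp only [Polynomial.coeff_add, Polynomial.coeff_C_mul, Polynomial.coeff_C_zero,
      Polynomial.coeff_X_pow, Polynomial.coeff_X_zero]
    simp only [mul_zero, zero_add, OfNat.zero_ne_ofNat, if_false, pow_two]
    rw [mul_dvd_mul_iff_left hp0.ne_zero]
    exact h00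
  · intro r hr
    rw [Polynomial.C_dvd_iff_dvd_coeff] at hr
    have h2 := hr 2
    have h0 := hr 0
    simp [Polynomial.coeff_X, Polynomial.coeff_C, -map_mul, -map_sub, -map_neg, -map_pow] at h2 h0
    obtain ⟨i, -, hi⟩ := (dvd_prime_pow hp1 d).1 h2
    rcases Nat.eq_zero_or_pos i with rfl | hi0
    · rw [pow_zero] at hi
      exact associated_one_iff_isUnit.1 hi
    · exfalso
      have : (X 1 : MvPolynomial (Fin 2) k) ∣ X 0 * (X 0 - 1) :=
        (dvd_pow_self _ (Nat.pos_iff_ne_zero.1 hi0)).trans (hi.symm.dvd.trans h0)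
      rcases hp1.dvd_or_dvd this with h | h
      · exact h10 h
      · exact h11 h

/-- Let `k` be an algebraically closed field and `d ≥ 1` an integer not
divisible by the characteristic of `k`.  Then the polynomial `x(x − 1)(1 − y) − u^d·y²` is
irreducible in the polynomial ring `k[x, y, u]`. -/
theorem stmt14 (k : Type*) [Field k] [IsAlgClosed k] (d : ℕ) (hd : 1 ≤ d)
    (hchar : ¬ ringChar k ∣ d) :
    Irreducible
      ((X 0 * (X 0 - 1) * (1 - X 1) - X 2 ^ d * X 1 ^ 2 : MvPolynomial (Fin 3) k)) := by
  let e := (renameEquiv k (Equiv.swap (0 : Fin 3) 1)).trans (finSuccEquiv k 2)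
  rw [← MulEquiv.irreducible_iff e]
  have e0 : e (X 0) = Polynomial.C (X 0) := by
    have : e (X 0) = finSuccEquiv k 2 (X (Fin.succ 0)) := by simp [e]
    rw [this, finSuccEquiv_X_succ]
  have e1 : e (X 1) = Polynomial.X := by
    have : e (X 1) = finSuccEquiv k 2 (X 0) := by simp [e]
    rw [this, finSuccEquiv_X_zero]
  have e2 : e (X 2) = Polynomial.C (X 1) := by
    have : e (X 2) = finSuccEquiv k 2 (X (Fin.succ 1)) := by
      simp [e, Equiv.swap_apply_of_ne_of_ne]
    rw [this, finSuccEquiv_X_succ]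
  convert aux_irr k d using 1
  simp only [map_sub, map_mul, map_pow, map_one, e0, e1, e2, map_neg]
  ring
end
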